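/- Given a finite Markov decision process, let V* : S → ℝ satisfy T_m V* = V* and let (β_k)_{k≥1} be a sequence of positive reals. Let V₀ : S → ℝ be arbitrary and define V_t = T_{β_t}(T_{β_{t−1}}(… T_{β_1}(V₀)…)) for t ≥ 1. Then for every t ≥ 1, ‖V_t − V*‖∞ ≤ γ^t·‖V₀ − V*‖∞ + log(|A|)·∑_{k=1}^{t} γ^{t−k}/β_k. -/

import Mathlib

/-!
The Boltzmann average `boltz β x` lies in `[fmax x - log n / β, fmax x]`, where `n` is the number of
coordinates: with Gibbs weights proportional to `exp (β * x i)`, the gap between the log-partition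
function divided by `β` and the average is the entropy of the weights divided by `β`, and entropy is
at most `log n` (`fmax_sub_boltz_le`). Hence `T_β V` is within `log |A| / β` of `T_m V`. Since `T_m`
is a `γ`-contraction for the sup norm with fixed point `V*`, one step of the iteration satisfies
`‖T_β V - V*‖ ≤ γ * ‖V - V*‖ + log |A| / β` (`supNorm_Tb_sub_le`), and the claim follows by
unrolling this recursion.
-/

noncomputable def boltz {ι : Type*} [Fintype ι] (β : ℝ) (x : ι → ℝ) : ℝ :=
  (∑ i, Real.exp (β * x i) * x i) / ∑ i, Real.exp (β * x i)

noncomputable def fmax {ι : Type*} [Fintype ι] [Nonempty ι] (x : ι → ℝ) : ℝ :=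
  Finset.univ.sup' Finset.univ_nonempty x

noncomputable def fmin {ι : Type*} [Fintype ι] [Nonempty ι] (x : ι → ℝ) : ℝ :=
  Finset.univ.inf' Finset.univ_nonempty x

noncomputable def Qval {S A : Type*} [Fintype S] (p : S → A → S → ℝ) (r : S → A → ℝ)
    (γ : ℝ) (V : S → ℝ) (s : S) (a : A) : ℝ :=
  r s a + γ * ∑ s', p s a s' * V s'

noncomputable def Tm {S A : Type*} [Fintype S] [Fintype A] [Nonempty A]
    (p : S → A → S → ℝ) (r : S → A → ℝ) (γ : ℝ) (V : S → ℝ) (s : S) : ℝ :=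
  fmax (Qval p r γ V s)

noncomputable def Tb {S A : Type*} [Fintype S] [Fintype A]
    (p : S → A → S → ℝ) (r : S → A → ℝ) (γ : ℝ) (β : ℝ) (V : S → ℝ) (s : S) : ℝ :=
  boltz β (Qval p r γ V s)

noncomputable def supNorm {S : Type*} [Fintype S] [Nonempty S] (V : S → ℝ) : ℝ :=
  fmax (fun s => |V s|)

section fmax

variable {ι : Type*} [Fintype ι] [Nonempty ι]

theorem le_fmax (x : ι → ℝ) (i : ι) : x i ≤ fmax x :=
  Finset.le_sup' x (Finset.mem_univ i)

theorem fmax_le {x : ι → ℝ} {c : ℝ} (h : ∀ i, x i ≤ c) : fmax x ≤ c :=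
  Finset.sup'_le _ _ fun i _ => h i

theorem abs_fmax_sub_fmax_le {x y : ι → ℝ} {c : ℝ} (h : ∀ i, |x i - y i| ≤ c) :
    |fmax x - fmax y| ≤ c := by
  have h1 : fmax x ≤ fmax y + c :=
    fmax_le fun i => by linarith [(abs_le.1 (h i)).2, le_fmax y i]
  have h2 : fmax y ≤ fmax x + c :=
    fmax_le fun i => by linarith [(abs_le.1 (h i)).1, le_fmax x i]
  exact abs_le.2 ⟨by linarith, by linarith⟩

theorem sum_exp_pos (β : ℝ) (x : ι → ℝ) : 0 < ∑ i, Real.exp (β * x i) :=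
  Finset.sum_pos (fun _ _ => Real.exp_pos _) Finset.univ_nonempty

theorem boltz_le_fmax (β : ℝ) (x : ι → ℝ) : boltz β x ≤ fmax x := by
  rw [boltz, div_le_iff₀ (sum_exp_pos β x), Finset.mul_sum]
  refine Finset.sum_le_sum fun i _ => ?_
  rw [mul_comm]
  exact mul_le_mul_of_nonneg_right (le_fmax x i) (Real.exp_pos _).le

/-- The entropy bound for Gibbs weights, in the form obtained by multiplying
`log Z - log n - β * x i + 1 ≤ exp (log Z - log n - β * x i)` by `exp (β * x i)` and summing,
where `Z` is the partition function. -/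
theorem sum_exp_mul_le (β : ℝ) (x : ι → ℝ) :
    ∑ i, Real.exp (β * x i) *
      (Real.log (∑ j, Real.exp (β * x j)) - Real.log (Fintype.card ι) - β * x i) ≤ 0 := by
  have hZ := sum_exp_pos β x
  set Z := ∑ j, Real.exp (β * x j) with hZdef
  have hn : (0 : ℝ) < Fintype.card ι := by exact_mod_cast Fintype.card_pos
  have key : ∀ i, Real.exp (β * x i) * (Real.log Z - Real.log (Fintype.card ι) - β * x i)
      ≤ Z / Fintype.card ι - Real.exp (β * x i) := fun i => by
    have h := mul_le_mul_of_nonneg_left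
      (Real.add_one_le_exp (Real.log Z - Real.log (Fintype.card ι) - β * x i))
      (Real.exp_pos (β * x i)).le
    rw [← Real.exp_add, add_sub_cancel, Real.exp_sub, Real.exp_log hZ, Real.exp_log hn] at h
    linarith
  refine (Finset.sum_le_sum fun i _ => key i).trans ?_
  rw [Finset.sum_sub_distrib, ← hZdef, Finset.sum_const, Finset.card_univ, nsmul_eq_mul,
    mul_div_cancel₀ _ hn.ne', sub_self]

theorem fmax_sub_boltz_le {β : ℝ} (hβ : 0 < β) (x : ι → ℝ) :
    fmax x - boltz β x ≤ Real.log (Fintype.card ι) / β := by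
  have hZ := sum_exp_pos β x
  have hent := sum_exp_mul_le β x
  have hmax : fmax x ≤ Real.log (∑ j, Real.exp (β * x j)) / β := by
    refine fmax_le fun i => ?_
    rw [le_div_iff₀ hβ, mul_comm, Real.le_log_iff_exp_le hZ]
    exact Finset.single_le_sum (f := fun j => Real.exp (β * x j))
      (fun j _ => (Real.exp_pos _).le) (Finset.mem_univ i)
  have hb : boltz β x * ∑ i, Real.exp (β * x i) = ∑ i, Real.exp (β * x i) * x i :=
    div_mul_cancel₀ _ hZ.ne'
  simp only [mul_sub, Finset.sum_sub_distrib, ← Finset.sum_mul, mul_left_comm _ β,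
    ← Finset.mul_sum] at hent
  rw [← hb] at hent
  have h : Real.log (∑ j, Real.exp (β * x j)) - Real.log (Fintype.card ι) - β * boltz β x ≤ 0 := by
    by_contra! hc
    nlinarith [mul_pos hZ hc]
  rw [le_div_iff₀ hβ] at hmax ⊢
  linarith

end fmax

section mdp

variable {S A : Type*} [Fintype S] [Nonempty S]

theorem abs_Qval_sub_le {p : S → A → S → ℝ} (hp0 : ∀ s a s', 0 ≤ p s a s')
    (hp1 : ∀ s a, ∑ s', p s a s' = 1) (r : S → A → ℝ) {γ : ℝ} (hγ0 : 0 ≤ γ)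
    (V W : S → ℝ) (s : S) (a : A) :
    |Qval p r γ V s a - Qval p r γ W s a| ≤ γ * supNorm (fun s => V s - W s) := by
  have h : Qval p r γ V s a - Qval p r γ W s a = γ * ∑ s', p s a s' * (V s' - W s') := by
    simp only [Qval, mul_sub, Finset.sum_sub_distrib]
    ring
  rw [h, abs_mul, abs_of_nonneg hγ0]
  refine mul_le_mul_of_nonneg_left ?_ hγ0
  calc |∑ s', p s a s' * (V s' - W s')|
      ≤ ∑ s', |p s a s' * (V s' - W s')| := Finset.abs_sum_le_sum_abs _ _
    _ ≤ ∑ s', p s a s' * supNorm (fun s => V s - W s) := by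
        refine Finset.sum_le_sum fun s' _ => ?_
        rw [abs_mul, abs_of_nonneg (hp0 s a s')]
        exact mul_le_mul_of_nonneg_left (le_fmax (fun s => |V s - W s|) s') (hp0 s a s')
    _ = supNorm (fun s => V s - W s) := by rw [← Finset.sum_mul, hp1, one_mul]

theorem supNorm_Tb_sub_le [Fintype A] [Nonempty A] {p : S → A → S → ℝ}
    (hp0 : ∀ s a s', 0 ≤ p s a s') (hp1 : ∀ s a, ∑ s', p s a s' = 1) (r : S → A → ℝ) {γ : ℝ}
    (hγ0 : 0 ≤ γ) {Vstar : S → ℝ} (hVstar : Tm p r γ Vstar = Vstar) {β : ℝ} (hβ : 0 < β)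
    (V : S → ℝ) :
    supNorm (fun s => Tb p r γ β V s - Vstar s)
      ≤ γ * supNorm (fun s => V s - Vstar s) + Real.log (Fintype.card A) / β := by
  refine fmax_le fun s => ?_
  have h1 := abs_le.1 (abs_fmax_sub_fmax_le fun a => abs_Qval_sub_le hp0 hp1 r hγ0 V Vstar s a)
  have h2 := fmax_sub_boltz_le hβ (Qval p r γ V s)
  have h3 := boltz_le_fmax β (Qval p r γ V s)
  have h4 : fmax (Qval p r γ Vstar s) = Vstar s := congrFun hVstar s
  have h5 : 0 ≤ Real.log (Fintype.card A) / β :=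
    div_nonneg (Real.log_natCast_nonneg _) hβ.le
  rw [h4] at h1
  simp only [Tb]
  exact abs_le.2 ⟨by linarith [h1.1], by linarith [h1.2]⟩

end mdp


theorem dbs_vi_error_recursion {S A : Type*} [Fintype S] [Fintype A] [Nonempty S] [Nonempty A]
    (p : S → A → S → ℝ) (hp0 : ∀ s a s', 0 ≤ p s a s') (hp1 : ∀ s a, ∑ s', p s a s' = 1)
    (r : S → A → ℝ) (γ : ℝ) (hγ0 : 0 ≤ γ) (hγ1 : γ < 1)
    (Vstar : S → ℝ) (hVstar : Tm p r γ Vstar = Vstar)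
    (β : ℕ → ℝ) (hβ : ∀ k ≥ 1, 0 < β k)
    (V₀ : S → ℝ) (Vseq : ℕ → S → ℝ)
    (hV0 : Vseq 0 = V₀)
    (hVsucc : ∀ t, Vseq (t + 1) = Tb p r γ (β (t + 1)) (Vseq t)) :
    ∀ t ≥ 1,
      supNorm (fun s => Vseq t s - Vstar s)
        ≤ γ ^ t * supNorm (fun s => V₀ s - Vstar s)
          + Real.log (Fintype.card A) * ∑ k ∈ Finset.Icc 1 t, γ ^ (t - k) / β k := by
  intro t ht
  -- The bound also holds at `t = 0`, where the sum is empty, so the induction starts there.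
  clear ht
  induction t with
  | zero => simp [hV0]
  | succ t ih =>
    have hsum : ∑ k ∈ Finset.Icc 1 (t + 1), γ ^ (t + 1 - k) / β k
        = γ * ∑ k ∈ Finset.Icc 1 t, γ ^ (t - k) / β k + 1 / β (t + 1) := by
      rw [Finset.sum_Icc_succ_top (by omega), Nat.sub_self, pow_zero, Finset.mul_sum]
      congr 1
      refine Finset.sum_congr rfl fun k hk => ?_
      rw [Nat.succ_sub (Finset.mem_Icc.1 hk).2, pow_succ]
      ring
    have hstep := supNorm_Tb_sub_le hp0 hp1 r hγ0 hVstar (hβ (t + 1) (by omega)) (Vseq t)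
    rw [← hVsucc] at hstep
    refine (hstep.trans (add_le_add_left (mul_le_mul_of_nonneg_left ih hγ0) _)).trans_eq ?_
    rw [hsum]
    ring
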